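/- arXiv:2103.02321 — 3 statements merged into one kernel-verified Lean document; each statement's English description precedes it below -/
import Mathlib

section
/- Let u be quasi-definite with SMOP (P_n) and recurrence coefficients (a_n, b_n), let c ∈ ℂ with P_n(c) ≠ 0 for all n, suppose ũ = (x−c)u is quasi-definite with SMOP (P̃_n) and associated first-kind polynomials (P̃^{(1)}_n), and let u^α be a linear functional whose SMOP is the sequence R_n(x) = (u_0/ũ_0)·[(x−c)·P^{(1)}_n(x) − P_{n+1}(x)]. Then the sequence (P̃^{(1)}_n)_{n≥0} is orthogonal with respect to the Christoffel transformation (x−c)u^α: ⟨(x−c)u^α, P̃^{(1)}_n·P̃^{(1)}_m⟩ = 0 for n ≠ m and ⟨(x−c)u^α, (P̃^{(1)}_n)²⟩ ≠ 0 for all n. In other words, ũ^{(1)} is a canonical Christoffel transformation of u^α. -/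
open Polynomial

noncomputable section

/-- Apply a linear functional (identified with its moment sequence) to a polynomial:
`⟨u, p⟩ = Σ_k c_k u_k` for `p = Σ_k c_k x^k`. -/
def fapply (u : ℕ → ℂ) (p : Polynomial ℂ) : ℂ := p.sum fun k ck => ck * u k

/-- `P` is the sequence of monic orthogonal polynomials (SMOP) of the functional `u`. -/
def IsSMOP (u : ℕ → ℂ) (P : ℕ → Polynomial ℂ) : Prop :=
  (∀ n, (P n).Monic) ∧ (∀ n, (P n).natDegree = n) ∧
    (∀ n m, n ≠ m → fapply u (P n * P m) = 0) ∧ (∀ n, fapply u (P n * P n) ≠ 0)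

/-- A functional is quasi-definite iff it admits a SMOP. -/
def IsQuasiDefinite (u : ℕ → ℂ) : Prop := ∃ P, IsSMOP u P

/-- Three term recurrence relation `x P_n = P_{n+1} + b_n P_n + a_n P_{n-1}`,
with `P_{-1} = 0`, `P_0 = 1`. -/
def HasTTRR (P : ℕ → Polynomial ℂ) (a b : ℕ → ℂ) : Prop :=
  P 0 = 1 ∧ X * P 0 = P 1 + C (b 0) * P 0 ∧
    ∀ n, 1 ≤ n → X * P n = P (n + 1) + C (b n) * P n + C (a n) * P (n - 1)

/-- Wronskian `W(p,q)(x) = p(x) q'(x) - p'(x) q(x)`. -/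
def Wr (p q : Polynomial ℂ) (x : ℂ) : ℂ :=
  p.eval x * (derivative q).eval x - (derivative p).eval x * q.eval x

/-- The monic Jacobi matrix with diagonal `b`, superdiagonal `1` and subdiagonal
entries `J_{n+1,n} = a_{n+1}`. -/
def jacobi (a b : ℕ → ℂ) (i j : ℕ) : ℂ :=
  if i = j then b i else if j = i + 1 then 1 else if i = j + 1 then a i else 0

/-- Entrywise product of semi-infinite (banded) matrices; the sum has finite support. -/
def mprod (A B : ℕ → ℕ → ℂ) (i j : ℕ) : ℂ := ∑' k, A i k * B k j

/-- `w` is the moment sequence of the inverse functional `u⁻¹`: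
the convolution of the moments of `u` and `w` is `(1,0,0,…)`. -/
def IsInverseMoments (u w : ℕ → ℂ) : Prop :=
  ∀ n, ∑ k ∈ Finset.range (n + 1), u k * w (n - k) = if n = 0 then 1 else 0

/-- Apply a functional `u` to the second (outer) variable `y` of a bivariate polynomial
`D = Σ_k q_k(x) y^k`, giving `Σ_k u_k q_k(x)`. -/
def fapplyY (u : ℕ → ℂ) (D : Polynomial (Polynomial ℂ)) : Polynomial ℂ :=
  D.sum fun k q => u k • q

theorem fapply_eq_lsum (u : ℕ → ℂ) (p : ℂ[X]) :
    fapply u p = Polynomial.lsum (fun k => LinearMap.mulRight ℂ (u k)) p := by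
  simp [fapply, Polynomial.lsum_apply]

theorem fapply_add' (u : ℕ → ℂ) (p q : ℂ[X]) :
    fapply u (p + q) = fapply u p + fapply u q := by
  simp only [fapply_eq_lsum, map_add]

theorem fapply_sub' (u : ℕ → ℂ) (p q : ℂ[X]) :
    fapply u (p - q) = fapply u p - fapply u q := by
  simp only [fapply_eq_lsum, map_sub]

theorem fapply_C_mul' (u : ℕ → ℂ) (r : ℂ) (p : ℂ[X]) :
    fapply u (C r * p) = r * fapply u p := by
  simp only [fapply_eq_lsum, ← smul_eq_C_mul, map_smul, smul_eq_mul]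

theorem fapply_shift (u : ℕ → ℂ) (c : ℂ) (p : ℂ[X]) :
    fapply (fun k => u (k + 1) - c * u k) p = fapply u ((X - C c) * p) := by
  induction p using Polynomial.induction_on' with
  | add p q hp hq => rw [mul_add, fapply_add', fapply_add', hp, hq]
  | monomial n r =>
    have h : (X - C c) * monomial n r = monomial (n + 1) r - C c * monomial n r := by
      rw [sub_mul, X_mul_monomial]
    rw [h, fapply_sub', fapply_C_mul']
    simp only [fapply]
    rw [sum_monomial_index _ _ (by simp), sum_monomial_index _ _ (by simp),
      sum_monomial_index _ _ (by simp)]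
    ring

/-- Orthogonality of the Christoffel transform. -/
theorem christoffel_orth (v : ℕ → ℂ) (c : ℂ) (S T : ℕ → ℂ[X]) (d l : ℕ → ℂ)
    (hd : ∀ n, d n ≠ 0)
    (h0 : ∀ n m, n ≠ m → fapply v (S n * S m) = 0) (h1 : ∀ n, fapply v (S n * S n) ≠ 0)
    (hST0 : S 0 = T 0) (hST : ∀ n, S (n + 1) = T (n + 1) + C (l n) * T n)
    (hT : ∀ n, (X - C c) * T n = S (n + 1) - C (d n) * S n) :
    (∀ n m, n ≠ m → fapply (fun k => v (k + 1) - c * v k) (T n * T m) = 0)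
    ∧ (∀ n, fapply (fun k => v (k + 1) - c * v k) (T n * T n) ≠ 0) := by
  have key : ∀ n m, fapply (fun k => v (k + 1) - c * v k) (T n * S m)
      = fapply v (S (n + 1) * S m) - d n * fapply v (S n * S m) := by
    intro n m
    rw [fapply_shift, ← mul_assoc, hT, sub_mul, fapply_sub', mul_assoc, fapply_C_mul']
  have hTS : ∀ m, T (m + 1) = S (m + 1) - C (l m) * T m := fun m => by rw [hST]; ring
  have low : ∀ m n, m < n → fapply (fun k => v (k + 1) - c * v k) (T n * T m) = 0 := by
    intro m
    induction m with
    | zero =>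
      intro n hn
      rw [← hST0, key, h0 _ _ (by omega), h0 _ _ (by omega)]; ring
    | succ m ih =>
      intro n hn
      rw [hTS m, mul_sub, fapply_sub', key, h0 _ _ (by omega), h0 _ _ (by omega),
        mul_left_comm, fapply_C_mul', ih n (by omega)]
      ring
  refine ⟨fun n m hnm => ?_, fun n => ?_⟩
  · rcases lt_or_gt_of_ne hnm with h | h
    · rw [mul_comm]; exact low _ _ h
    · exact low _ _ h
  · have : fapply (fun k => v (k + 1) - c * v k) (T n * T n)
        = fapply (fun k => v (k + 1) - c * v k) (T n * S n) := by
      cases n with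
      | zero => rw [hST0]
      | succ m =>
        conv_rhs => rw [hST m]
        rw [mul_add, fapply_add', mul_left_comm, fapply_C_mul', low m (m + 1) (by omega)]
        ring
    rw [this, key, h0 _ _ (by omega)]
    simpa using ⟨hd n, h1 n⟩

/-- Darboux transform of a sequence satisfying a TTRR. -/
theorem darboux_exists (c : ℂ) (S : ℕ → ℂ[X]) (a b d l : ℕ → ℂ) (hS : HasTTRR S a b)
    (hb0 : b 0 = c - d 0) (hb : ∀ n, b (n + 1) = c + l n - d (n + 1))
    (ha : ∀ n, a (n + 1) = - l n * d n) :
    ∃ T : ℕ → ℂ[X], HasTTRR T (fun n => - d n * l (n - 1)) (fun n => c + l n - d n) ∧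
      S 0 = T 0 ∧ (∀ n, S (n + 1) = T (n + 1) + C (l n) * T n) ∧
      (∀ n, (X - C c) * T n = S (n + 1) - C (d n) * S n) := by
  obtain ⟨hS0, hS1, hSn⟩ := hS
  let T : ℕ → ℂ[X] := fun n => Nat.rec 1 (fun n t => S (n + 1) - C (l n) * t) n
  have T0 : T 0 = 1 := rfl
  have Tn : ∀ n, T (n + 1) = S (n + 1) - C (l n) * T n := fun n => rfl
  clear_value T
  have hT : ∀ n, (X - C c) * T n = S (n + 1) - C (d n) * S n := by
    intro n
    induction n with
    | zero =>
      rw [hb0, hS0, C_sub] at hS1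
      rw [T0, hS0]
      linear_combination hS1
    | succ n ih =>
      have h := hSn (n + 1) (by omega)
      rw [hb, ha] at h
      simp only [C_sub, C_add, C_mul, C_neg, Nat.add_sub_cancel] at h
      rw [Tn]
      linear_combination h - C (l n) * ih
  refine ⟨T, ⟨T0, ?_, ?_⟩, by rw [hS0, T0], fun n => by rw [Tn]; ring, hT⟩
  · have h := hT 0
    have h2 := Tn 0
    simp only [C_sub, C_add, hS0, T0, zero_add] at h h2 ⊢
    linear_combination h - h2
  · intro n hn
    obtain ⟨k, rfl⟩ : ∃ k, n = k + 1 := ⟨n - 1, by omega⟩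
    have h := hT (k + 1)
    have h1 := Tn k
    have h2 := Tn (k + 1)
    simp only [C_sub, C_add, C_mul, C_neg, Nat.add_sub_cancel]
    linear_combination h - h2 + C (d (k + 1)) * h1

theorem ttrr_unique (P Q : ℕ → ℂ[X]) (a b a' b' : ℕ → ℂ) (hP : HasTTRR P a b)
    (hQ : HasTTRR Q a' b') (hb : ∀ n, b n = b' n) (ha : ∀ n, a (n + 1) = a' (n + 1)) :
    ∀ n, P n = Q n := by
  obtain ⟨p0, p1, pn⟩ := hP
  obtain ⟨q0, q1, qn⟩ := hQ
  have : ∀ n, P n = Q n ∧ P (n + 1) = Q (n + 1) := by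
    intro n
    induction n with
    | zero =>
      refine ⟨by rw [p0, q0], ?_⟩
      rw [p0, hb] at p1
      rw [q0] at q1
      rw [zero_add]
      linear_combination q1 - p1
    | succ n ih =>
      obtain ⟨i1, i2⟩ := ih
      refine ⟨i2, ?_⟩
      have h1 := pn (n + 1) (by omega)
      have h2 := qn (n + 1) (by omega)
      rw [hb, ha] at h1
      simp only [Nat.add_sub_cancel] at h1 h2
      rw [i1, i2] at h1
      linear_combination h2 - h1
  exact fun n => (this n).1

theorem coef_unique (w : ℕ → ℂ) (P Q : ℕ → ℂ[X]) (a b a' b' : ℕ → ℂ) (hP : HasTTRR P a b)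
    (hQ : HasTTRR Q a' b')
    (h0 : ∀ n m, n ≠ m → fapply w (P n * P m) = 0) (h1 : ∀ n, fapply w (P n * P n) ≠ 0)
    (g0 : ∀ n m, n ≠ m → fapply w (Q n * Q m) = 0) :
    (∀ n, b n = b' n) ∧ (∀ n, a (n + 1) = a' (n + 1)) := by
  obtain ⟨p0, p1, pn⟩ := hP
  obtain ⟨q0, q1, qn⟩ := hQ
  have : ∀ n, P n = Q n ∧ P (n + 1) = Q (n + 1) ∧ b n = b' n ∧
      (∀ m, n = m + 1 → a (m + 1) = a' (m + 1)) := by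
    intro n
    induction n with
    | zero =>
      have e : P 0 = Q 0 := by rw [p0, q0]
      have hb : b 0 = b' 0 := by
        have h : P 1 * P 0 + C (b 0) * (P 0 * P 0) = Q 1 * Q 0 + C (b' 0) * (P 0 * P 0) := by
          rw [← e] at q1 ⊢
          linear_combination P 0 * q1 - P 0 * p1
        have h := congrArg (fapply w) h
        rw [fapply_add', fapply_add', fapply_C_mul', fapply_C_mul', h0 _ _ (by omega),
          g0 _ _ (by omega), zero_add, zero_add] at h
        exact mul_right_cancel₀ (h1 0) h
      refine ⟨e, ?_, hb, fun m hm => by omega⟩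
      rw [hb, e] at p1
      rw [zero_add]
      linear_combination q1 - p1
    | succ n ih =>
      obtain ⟨i1, i2, -, -⟩ := ih
      have e1 := pn (n + 1) (by omega)
      have e2 := qn (n + 1) (by omega)
      simp only [Nat.add_sub_cancel] at e1 e2
      have t : ∀ k, k ≤ n + 1 → P k = Q k → 
          b (n + 1) * fapply w (P (n + 1) * P k) + a (n + 1) * fapply w (P n * P k)
          = b' (n + 1) * fapply w (P (n + 1) * P k) + a' (n + 1) * fapply w (P n * P k) := by
        intro k hk ek
        have h : P (n + 1 + 1) * P k +
            (C (b (n + 1)) * (P (n + 1) * P k) + C (a (n + 1)) * (P n * P k))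
            = Q (n + 1 + 1) * Q k +
            (C (b' (n + 1)) * (P (n + 1) * P k) + C (a' (n + 1)) * (P n * P k)) := by
          rw [← i1, ← i2] at e2
          rw [← ek]
          linear_combination P k * e2 - P k * e1
        have h := congrArg (fapply w) h
        simp only [fapply_add', fapply_C_mul'] at h
        rw [h0 (n + 1 + 1) k (by omega), g0 (n + 1 + 1) k (by omega), zero_add, zero_add] at h
        exact h
      have hb : b (n + 1) = b' (n + 1) := by
        have h := t (n + 1) le_rfl i2
        rw [h0 n (n + 1) (by omega), mul_zero, mul_zero, add_zero, add_zero] at h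
        exact mul_right_cancel₀ (h1 _) h
      have ha : a (n + 1) = a' (n + 1) := by
        have h := t n (by omega) i1
        rw [h0 (n + 1) n (by omega), mul_zero, mul_zero, zero_add, zero_add] at h
        exact mul_right_cancel₀ (h1 _) h
      refine ⟨i2, ?_, hb, fun m hm => ?_⟩
      · rw [hb, ha, i1, i2] at e1
        linear_combination e2 - e1
      · obtain rfl : n = m := by omega
        exact ha
  exact ⟨fun n => (this n).2.2.1, fun n => (this (n + 1)).2.2.2 n rfl⟩

/-- the first-kind associated polynomials `(P̃^{(1)}_n)` of the Christoffel
transformation `ũ = (x-c)u` are orthogonal with respect to the Christoffel transformation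
`(x-c)u^α` of the functional `u^α` whose SMOP is the co-recursive sequence `(R_n)`. -/
theorem stmt_13 (u : ℕ → ℂ) (c : ℂ) (P : ℕ → Polynomial ℂ) (hP : IsSMOP u P)
    (a b : ℕ → ℂ) (hrec : HasTTRR P a b) (ha : ∀ n, 1 ≤ n → a n ≠ 0)
    (hc : ∀ n, (P n).eval c ≠ 0)
    (P1 : ℕ → Polynomial ℂ)
    (hP1 : HasTTRR P1 (fun n => a (n + 1)) (fun n => b (n + 1)))
    (ut : ℕ → ℂ) (hut : ∀ n, ut n = u (n + 1) - c * u n) (hut0 : ut 0 ≠ 0)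
    (Pt : ℕ → Polynomial ℂ) (hPt : IsSMOP ut Pt)
    (at_ bt : ℕ → ℂ) (hrect : HasTTRR Pt at_ bt)
    (Pt1 : ℕ → Polynomial ℂ)
    (hPt1 : HasTTRR Pt1 (fun n => at_ (n + 1)) (fun n => bt (n + 1)))
    (R : ℕ → Polynomial ℂ)
    (hR : ∀ n, R n = C (u 0 / ut 0) * ((X - C c) * P1 n - P (n + 1)))
    (uα : ℕ → ℂ) (huα : IsSMOP uα R) :
    (∀ n m, n ≠ m → fapply (fun k => uα (k + 1) - c * uα k) (Pt1 n * Pt1 m) = 0)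
    ∧ (∀ n, fapply (fun k => uα (k + 1) - c * uα k) (Pt1 n * Pt1 n) ≠ 0) := by
  obtain ⟨d, hd⟩ : ∃ d : ℕ → ℂ, ∀ n, d n = (P (n + 1)).eval c / (P n).eval c := ⟨_, fun _ => rfl⟩
  have hd0 : ∀ n, d n ≠ 0 := fun n => by rw [hd]; exact div_ne_zero (hc _) (hc _)
  have hde : ∀ n, (P (n + 1)).eval c = d n * (P n).eval c := fun n => by
    rw [hd, div_mul_cancel₀ _ (hc n)]
  obtain ⟨l, hl⟩ : ∃ l : ℕ → ℂ, ∀ n, l n = - a (n + 1) / d n := ⟨_, fun _ => rfl⟩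
  have hal : ∀ n, a (n + 1) = - l n * d n := fun n => by
    rw [hl]; field_simp [hd0 n]
  have hb0 : b 0 = c - d 0 := by
    have h := congrArg (eval c) hrec.2.1
    have h2 := hde 0
    simp only [hrec.1, eval_mul, eval_add, eval_X, eval_C, eval_one, zero_add] at h h2
    linear_combination -h - h2
  have hb : ∀ n, b (n + 1) = c + l n - d (n + 1) := by
    intro n
    have h := congrArg (eval c) (hrec.2.2 (n + 1) (by omega))
    have h2 := hde (n + 1)
    have h3 := hde n
    simp only [eval_mul, eval_add, eval_X, eval_C, Nat.add_sub_cancel] at h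
    rw [hal] at h
    apply mul_right_cancel₀ (hc (n + 1))
    linear_combination -h - h2 - l n * h3
  obtain ⟨Q, hQ, hQ0, hQ1, hQ2⟩ := darboux_exists c P a b d l hrec hb0 hb hal
  have hQo := christoffel_orth u c P Q d l hd0 hP.2.2.1 hP.2.2.2 hQ0 hQ1 hQ2
  have hut' : ut = fun k => u (k + 1) - c * u k := funext hut
  obtain ⟨ebt, eat⟩ := coef_unique ut Pt Q at_ bt _ _ hrect hQ hPt.2.2.1 hPt.2.2.2
    (by rw [hut']; exact hQo.1)
  simp only [Nat.add_sub_cancel] at ebt eat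
  obtain ⟨κ, hκ⟩ : ∃ κ, κ = u 0 / ut 0 := ⟨_, rfl⟩
  rw [← hκ] at hR
  have hP1' : P 1 = X - C (b 0) := by
    have h := hrec.2.1
    rw [hrec.1] at h
    linear_combination -h
  have hP11' : P1 1 = X - C (b 1) := by
    have h := hP1.2.1
    rw [hP1.1] at h
    simp only [zero_add] at h
    linear_combination -h
  have hR0 : R 0 = 1 := (huα.1 0).natDegree_eq_zero.mp (huα.2.1 0)
  have hκd : -κ * d 0 = 1 := by
    have h := hR 0
    rw [hR0, hP1.1, zero_add, hP1', hb0] at h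
    have h := congrArg (eval c) h
    simp at h
    linear_combination -h
  have hRrec : HasTTRR R (fun n => a (n + 1))
      (fun n => if n = 0 then c - d 1 else b (n + 1)) := by
    refine ⟨hR0, ?_, ?_⟩
    · have h2 := hrec.2.2 1 le_rfl
      rw [hP1', hrec.1, hb0] at h2
      have hb1 := hb 0
      have ha1 := hal 0
      simp only [zero_add] at hb1 ha1
      rw [hR0, hR 1, hP11']
      rw [hb1, ha1] at h2
      rw [hb1]
      have k : -C κ * C (d 0) = (1 : ℂ[X]) := by rw [← C_neg, ← C_mul, hκd, C_1]
      simp only [C_sub, C_add, C_mul, C_neg, if_true] at h2 ⊢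
      norm_num at h2 ⊢
      linear_combination - C κ * h2 + (C c - X - C (d 1)) * k
    · intro n hn
      obtain ⟨k, rfl⟩ : ∃ k, n = k + 1 := ⟨n - 1, by omega⟩
      have h1 := hrec.2.2 (k + 1 + 1) (by omega)
      have h2 := hP1.2.2 (k + 1) (by omega)
      simp only [Nat.add_sub_cancel] at h1 h2 ⊢
      rw [if_neg (by omega), hR, hR, hR]
      linear_combination C κ * (X - C c) * h2 - C κ * h1
  obtain ⟨T, hT, hT0, hT1, hT2⟩ := darboux_exists c R _ _ (fun n => d (n + 1))
    (fun n => l (n + 1)) hRrec (by simp) (fun n => by simp [hb]) (fun n => hal (n + 1))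
  have hTo := christoffel_orth uα c R T _ _ (fun n => hd0 (n + 1)) huα.2.2.1 huα.2.2.2
    hT0 hT1 hT2
  have e : Pt1 = T := by
    funext n
    refine ttrr_unique _ _ _ _ _ _ hPt1 hT (fun n => ebt (n + 1)) (fun n => ?_) n
    simp only [Nat.add_sub_cancel]
    exact eat (n + 1)
  rw [e]
  exact hTo
end
end

section
/- Let u be quasi-definite with SMOP (P_n), Jacobi matrix J, and recurrence coefficients (a_n, b_n); let c ∈ ℂ with P_n(c) ≠ 0 for all n, and suppose ũ = (x−c)u is quasi-definite with recurrence coefficients (ã_n, b̃_n). Assume J − cI = L·U as in the Christoffel LU factorization (L unit lower bidiagonal with subdiagonal ℓ_n = −(P_{n−1}(c)/P_n(c))·(⟨u,P_n²⟩/⟨u,P_{n−1}²⟩), U upper bidiagonal with diagonal β_n = −P_{n+1}(c)/P_n(c) and superdiagonal 1). Let J_α be the Jacobi matrix of the co-recursive sequence (R_n) of parameter α = −a_1·u_0/ũ_0 with respect to u^{(1)} (so J_α has diagonal (b_1+α, b_2, b_3, …), subdiagonal (a_2, a_3, …), superdiagonal 1), and let J̃^{(1)} be the Jacobi matrix with diagonal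 b̃_{n+1}, subdiagonal ã_{n+2}, superdiagonal 1 (the Jacobi matrix of (P̃^{(1)}_n)). Define L_1 and U_1 by deleting the first row and the first column of L and of U respectively (L_1 unit lower bidiagonal with subdiagonal ℓ_2, ℓ_3, …; U_1 upper bidiagonal with diagonal β_1, β_2, … and superdiagonal 1). Then, entrywise, J_α − cI = L_1·U_1 and J̃^{(1)} − cI = U_1·L_1. -/
open Polynomial

noncomputable section

lemma aux_add (u : ℕ → ℂ) (p q : Polynomial ℂ) : fapply u (p + q) = fapply u p + fapply u q := by
  unfold fapply
  exact Polynomial.sum_add_index p q _ (by simp) (by intros; ring)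

lemma aux_C (u : ℕ → ℂ) (r : ℂ) (p : Polynomial ℂ) : fapply u (C r * p) = r * fapply u p := by
  unfold fapply
  rw [← Polynomial.smul_eq_C_mul, Polynomial.sum_smul_index p r _ (by simp),
    Polynomial.sum_def, Polynomial.sum_def, Finset.mul_sum]
  exact Finset.sum_congr rfl (by intros; ring)

lemma aux_sub (u : ℕ → ℂ) (p q : Polynomial ℂ) : fapply u (p - q) = fapply u p - fapply u q := by
  have h : p - q = p + C (-1) * q := by simp [sub_eq_add_neg]
  rw [h, aux_add, aux_C]; ring

lemma aux_mono (u : ℕ → ℂ) (n : ℕ) (r : ℂ) : fapply u (monomial n r) = r * u n := by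
  unfold fapply
  exact Polynomial.sum_monomial_index r _ (by simp)

lemma aux_ut (u ut : ℕ → ℂ) (c : ℂ) (hut : ∀ n, ut n = u (n + 1) - c * u n)
    (p : Polynomial ℂ) : fapply ut p = fapply u ((X - C c) * p) := by
  induction p using Polynomial.induction_on' with
  | add p q hp hq => rw [mul_add, aux_add, aux_add, hp, hq]
  | monomial n r =>
    rw [sub_mul, aux_sub, aux_C, X_mul_monomial, aux_mono, aux_mono, aux_mono, hut]; ring

lemma aux_deg {P : Polynomial ℂ} {n : ℕ} (hm : P.Monic) (hd : P.natDegree = n) (R : Polynomial ℂ)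
    (hR : R.degree < ((n + 1 : ℕ) : WithBot ℕ)) :
    (R - C (R.coeff n) * P).degree < (n : WithBot ℕ) := by
  rw [Polynomial.degree_lt_iff_coeff_zero] at hR ⊢
  intro m hm'
  rcases Nat.eq_or_lt_of_le hm' with h | h
  · subst h
    have : P.coeff n = 1 := by rw [← hd]; exact hm
    simp [this]
  · have : P.coeff m = 0 := Polynomial.coeff_eq_zero_of_natDegree_lt (by omega)
    simp [this, hR m h]

lemma aux_orth {u : ℕ → ℂ} {P : ℕ → Polynomial ℂ} (hP : IsSMOP u P) (n : ℕ) :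
    ∀ k, k ≤ n → ∀ p : Polynomial ℂ, p.degree < (k : WithBot ℕ) → fapply u (P n * p) = 0 := by
  intro k
  induction k with
  | zero =>
    intro _ p hp
    have : p = 0 := by
      rw [Polynomial.degree_lt_iff_coeff_zero] at hp
      ext m; simpa using hp m (Nat.zero_le _)
    simp [this, fapply]
  | succ k ih =>
    intro hk p hp
    have h1 := ih (by omega) _ (aux_deg (hP.1 k) (hP.2.1 k) p hp)
    have h2 : P n * p = P n * (p - C (p.coeff k) * P k) + C (p.coeff k) * (P n * P k) := by ring
    rw [h2, aux_add, aux_C, h1, hP.2.2.1 n k (by omega)]; simp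

lemma aux_zero {u : ℕ → ℂ} {P : ℕ → Polynomial ℂ} (hP : IsSMOP u P) :
    ∀ n : ℕ, ∀ R : Polynomial ℂ, R.degree < (n : WithBot ℕ) →
      (∀ m : ℕ, m < n → fapply u (P m * R) = 0) → R = 0 := by
  intro n
  induction n with
  | zero =>
    intro p hp _
    rw [Polynomial.degree_lt_iff_coeff_zero] at hp
    ext m; simpa using hp m (Nat.zero_le _)
  | succ n ih =>
    intro R hR h
    have hd := aux_deg (hP.1 n) (hP.2.1 n) R hR
    have h1 := aux_orth hP n n le_rfl _ hd
    have h2 : P n * R = P n * (R - C (R.coeff n) * P n) + C (R.coeff n) * (P n * P n) := by ring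
    have h3 := h n (by omega)
    rw [h2, aux_add, aux_C, h1, zero_add] at h3
    have h4 : R.coeff n = 0 := by
      rcases mul_eq_zero.1 h3 with h | h
      · exact h
      · exact absurd h (hP.2.2.2 n)
    rw [h4] at hd
    exact ih R (by simpa using hd) (fun m hm => h m (by omega))

lemma aux_kernel {u ut : ℕ → ℂ} {c : ℂ} {P Pt : ℕ → Polynomial ℂ} (hP : IsSMOP u P)
    (hPt : IsSMOP ut Pt) (hut : ∀ n, ut n = u (n + 1) - c * u n)
    (hc : ∀ n, (P n).eval c ≠ 0) (n : ℕ) :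
    (X - C c) * Pt n = P (n + 1) + C (-((P (n + 1)).eval c / (P n).eval c)) * P n := by
  set S := (X - C c) * Pt n - P (n + 1) with hS
  have hmS : ((X - C c) * Pt n).Monic := (monic_X_sub_C c).mul (hPt.1 n)
  have hdS : ((X - C c) * Pt n).natDegree = n + 1 := by
    rw [(monic_X_sub_C c).natDegree_mul (hPt.1 n), natDegree_X_sub_C, hPt.2.1 n]; omega
  have hSd : S.degree < ((n + 1 : ℕ) : WithBot ℕ) := by
    have := aux_deg (hP.1 (n+1)) (hP.2.1 (n+1)) ((X - C c) * Pt n) (by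
      rw [Polynomial.degree_eq_natDegree hmS.ne_zero, hdS]; exact_mod_cast Nat.lt_succ_self _)
    have h1 : ((X - C c) * Pt n).coeff (n+1) = 1 := by
      have := hmS.coeff_natDegree; rwa [hdS] at this
    rw [h1] at this
    simpa [hS] using this
  have hz := aux_zero hP n _ (aux_deg (hP.1 n) (hP.2.1 n) S hSd) (by
    intro m hm
    have hdm : (P m).degree < (n : WithBot ℕ) := by
      rw [Polynomial.degree_eq_natDegree (hP.1 m).ne_zero, hP.2.1 m]; exact_mod_cast hm
    have e : P m * (S - C (S.coeff n) * P n) = (X - C c) * (Pt n * P m) - P (n+1) * P m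
        - C (S.coeff n) * (P n * P m) := by rw [hS]; ring
    rw [e, aux_sub, aux_sub, aux_C, ← aux_ut u ut c hut, aux_orth hPt n n le_rfl _ hdm,
      hP.2.2.1 _ _ (by omega : n + 1 ≠ m), hP.2.2.1 _ _ (by omega : n ≠ m)]; simp)
  have he := congrArg (Polynomial.eval c) hz
  simp only [hS, eval_sub, eval_mul, eval_X, eval_C, sub_self, zero_mul, eval_zero] at he
  rw [← hS] at he
  have hv : S.coeff n = -((P (n + 1)).eval c / (P n).eval c) := by
    have := hc n
    field_simp
    linear_combination -he
  rw [← hv]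
  linear_combination hz

lemma aux_LU (ell beta : ℕ → ℂ) (L U : ℕ → ℕ → ℂ)
    (hL : ∀ i j, L i j = if i = j then 1 else if i = j + 1 then ell i else 0)
    (hU : ∀ i j, U i j = if j = i then beta i else if j = i + 1 then 1 else 0) (i j : ℕ) :
    mprod L U i j = jacobi (fun n => ell n * beta (n - 1))
      (fun n => beta n + if n = 0 then 0 else ell n) i j := by
  unfold mprod jacobi
  cases i with
  | zero =>
    rw [tsum_eq_single 0 (by intro k hk; rw [hL]; simp [hk.symm])]
    rw [hL, hU]
    by_cases h : j = 0
    · simp [h]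
    · simp [h, Ne.symm h]
  | succ i =>
    rw [tsum_eq_sum (s := {i, i+1}) (by
      intro k hk
      simp only [Finset.mem_insert, Finset.mem_singleton, not_or] at hk
      rw [hL, if_neg (by omega), if_neg (by omega), zero_mul]),
      Finset.sum_pair (by omega), hL, hL, hU, hU]
    by_cases h1 : j = i
    · subst h1; simp [show ¬ j = j + 1 + 1 by omega]
    · by_cases h2 : j = i + 1
      · subst h2; simp; ring
      · by_cases h3 : j = i + 1 + 1
        · subst h3; simp [show ¬ i + 1 + 1 = i by omega]
        · simp [h1, h2, h3, Ne.symm h1, Ne.symm h2]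

lemma aux_UL (ell beta : ℕ → ℂ) (L U : ℕ → ℕ → ℂ)
    (hL : ∀ i j, L i j = if i = j then 1 else if i = j + 1 then ell i else 0)
    (hU : ∀ i j, U i j = if j = i then beta i else if j = i + 1 then 1 else 0) (i j : ℕ) :
    mprod U L i j = jacobi (fun n => ell n * beta n)
      (fun n => beta n + ell (n + 1)) i j := by
  unfold mprod jacobi
  rw [tsum_eq_sum (s := {i, i+1}) (by
      intro k hk
      simp only [Finset.mem_insert, Finset.mem_singleton, not_or] at hk
      rw [hU, if_neg (by omega), if_neg (by omega), zero_mul]),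
      Finset.sum_pair (by omega), hL, hL, hU, hU]
  by_cases h1 : i = j
  · subst h1; simp
  · by_cases h2 : j = i + 1
    · subst h2; simp [show ¬ i = i + 1 + 1 by omega]
    · by_cases h3 : i = j + 1
      · subst h3; simp [show ¬ j + 1 + 1 = j by omega, show ¬ j = j + 1 + 1 by omega]; ring
      · simp [h1, h2, h3, Ne.symm h2]

lemma aux_shift (c : ℂ) (a b a' b' : ℕ → ℂ)
    (hb : ∀ n, b n - c = b' n) (ha : ∀ n, a (n + 1) = a' (n + 1)) (i j : ℕ) :
    (jacobi a b i j - if i = j then c else 0) = jacobi a' b' i j := by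
  unfold jacobi
  by_cases h1 : i = j
  · simp [h1, hb]
  · by_cases h2 : j = i + 1
    · simp [h2]
    · by_cases h3 : i = j + 1
      · subst h3; simp [ha]
      · simp [h1, h2, h3]

/-- deleting the first row and column of the Christoffel LU factors of
`J - cI` gives LU factors of `J_α - cI`, and `J̃^{(1)} - cI = U₁·L₁`. -/
theorem stmt_14 (u : ℕ → ℂ) (c : ℂ) (P : ℕ → Polynomial ℂ) (hP : IsSMOP u P)
    (a b : ℕ → ℂ) (hrec : HasTTRR P a b) (ha : ∀ n, 1 ≤ n → a n ≠ 0)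
    (hc : ∀ n, (P n).eval c ≠ 0)
    (ut : ℕ → ℂ) (hut : ∀ n, ut n = u (n + 1) - c * u n) (hut0 : ut 0 ≠ 0)
    (Pt : ℕ → Polynomial ℂ) (hPt : IsSMOP ut Pt)
    (at_ bt : ℕ → ℂ) (hrect : HasTTRR Pt at_ bt)
    (ell beta : ℕ → ℂ)
    (hell : ∀ n, 1 ≤ n → ell n = -((P (n - 1)).eval c / (P n).eval c)
        * (fapply u (P n * P n) / fapply u (P (n - 1) * P (n - 1))))
    (hbeta : ∀ n, beta n = -((P (n + 1)).eval c / (P n).eval c))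
    (L U : ℕ → ℕ → ℂ)
    (hL : ∀ i j, L i j = if i = j then 1 else if i = j + 1 then ell i else 0)
    (hU : ∀ i j, U i j = if j = i then beta i else if j = i + 1 then 1 else 0)
    (hLU : ∀ i j, (jacobi a b i j - if i = j then c else 0) = mprod L U i j)
    (L1 U1 : ℕ → ℕ → ℂ)
    (hL1 : ∀ i j, L1 i j = if i = j then 1 else if i = j + 1 then ell (i + 1) else 0)
    (hU1 : ∀ i j, U1 i j = if j = i then beta (i + 1) else if j = i + 1 then 1 else 0)
    (Jα : ℕ → ℕ → ℂ)
    (hJα : ∀ i j, Jα i j = jacobi (fun n => a (n + 1))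
        (fun n => b (n + 1) + if n = 0 then -(a 1) * u 0 / ut 0 else 0) i j) :
    (∀ i j, (Jα i j - if i = j then c else 0) = mprod L1 U1 i j)
    ∧ (∀ i j, (jacobi (fun n => at_ (n + 1)) (fun n => bt (n + 1)) i j
        - if i = j then c else 0) = mprod U1 L1 i j) := by
  have hJ := fun i j => (hLU i j).trans (aux_LU ell beta L U hL hU i j)
  have hb0 : b 0 - c = beta 0 := by simpa [jacobi] using hJ 0 0
  have hbn : ∀ n, b (n + 1) - c = beta (n + 1) + ell (n + 1) := by
    intro n; simpa [jacobi] using hJ (n + 1) (n + 1)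
  have han : ∀ n, a (n + 1) = ell (n + 1) * beta n := by
    intro n; simpa [jacobi, show ¬ n = n + 1 + 1 by omega] using hJ (n + 1) n
  have hu1 : u 1 = b 0 * u 0 := by
    have h1 := hP.2.2.1 1 0 (by omega)
    have h2 := hrec.2.1
    rw [hrec.1] at h1 h2
    have h3 : P 1 * 1 = monomial 1 1 - monomial 0 (b 0) := by
      rw [monomial_one_one_eq_X, monomial_zero_left]; linear_combination -h2
    rw [h3, aux_sub, aux_mono, aux_mono] at h1
    linear_combination h1
  have hk := aux_kernel hP hPt hut hc
  simp only [← hbeta] at hk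
  have hX : (X - C c : Polynomial ℂ) ≠ 0 := X_sub_C_ne_zero c
  have hPQ : ∀ n, P (n + 1) = Pt (n + 1) + C (ell (n + 1)) * Pt n := by
    intro n
    apply mul_left_cancel₀ hX
    have h1 := hrec.2.2 (n + 1) (by omega)
    rw [Nat.add_sub_cancel] at h1
    have e1 : C (b (n + 1)) = C c + C (beta (n + 1)) + C (ell (n + 1)) := by
      rw [← C_add, ← C_add]; congr 1; linear_combination hbn n
    have e2 : C (a (n + 1)) = C (ell (n + 1)) * C (beta n) := by
      rw [← C_mul, han]
    rw [e1, e2] at h1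
    linear_combination h1 - hk (n + 1) - C (ell (n + 1)) * hk n
  have hcmp : ∀ n, bt (n + 1) - c = beta (n + 1) + ell (n + 2) ∧
      at_ (n + 1) = ell (n + 1) * beta (n + 1) := by
    intro n
    have h1 := hrect.2.2 (n + 1) (by omega)
    rw [Nat.add_sub_cancel] at h1
    have h2 := hk (n + 1)
    rw [hPQ (n + 1), hPQ n] at h2
    have h3 : C (bt (n + 1) - c - beta (n + 1) - ell (n + 2)) * Pt (n + 1)
        + C (at_ (n + 1) - ell (n + 1) * beta (n + 1)) * Pt n = 0 := by
      simp only [C_sub, C_mul]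
      linear_combination h2 - h1
    have c1 : ∀ m, (Pt m).coeff m = 1 := by
      intro m
      have := (hPt.1 m).coeff_natDegree
      rwa [hPt.2.1 m] at this
    have c2 : (Pt n).coeff (n + 1) = 0 :=
      coeff_eq_zero_of_natDegree_lt (by rw [hPt.2.1 n]; omega)
    have h4 := congrArg (fun p => coeff p (n + 1)) h3
    simp only [coeff_add, coeff_C_mul, c1, c2, coeff_zero, mul_one, mul_zero, add_zero] at h4
    rw [h4] at h3
    have h5 := congrArg (fun p => coeff p n) h3
    simp only [coeff_add, coeff_C_mul, c1, coeff_zero, mul_one, C_0, zero_mul, zero_add] at h5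
    exact ⟨by linear_combination h4, by linear_combination h5⟩
  constructor
  · intro i j
    rw [hJα, aux_LU (fun n => ell (n + 1)) (fun n => beta (n + 1)) L1 U1 hL1 hU1]
    apply aux_shift
    · intro n
      cases n with
      | zero =>
        have h0 : ut 0 = beta 0 * u 0 := by rw [hut, hu1]; linear_combination u 0 * hb0
        have h1 : -(a 1) * u 0 / ut 0 = - ell 1 := by
          rw [div_eq_iff hut0, han 0, h0]; ring
        simp only [if_true, h1]
        linear_combination hbn 0
      | succ n => simpa using hbn (n + 1)
    · intro n
      simpa using han (n + 1)
  · intro i j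
    rw [aux_UL (fun n => ell (n + 1)) (fun n => beta (n + 1)) L1 U1 hL1 hU1]
    apply aux_shift
    · intro n; exact (hcmp n).1
    · intro n; exact (hcmp (n + 1)).2
end
end

section
/- Let v be quasi-definite with SMOP (P_n) and associated first-kind polynomials (P^{(1)}_n), and let v̂ with (x−c)v̂ = v be quasi-definite with SMOP (P̂_n) and associated first-kind polynomials (P̂^{(1)}_n), defined from the recurrence coefficients of (P̂_n). Let v^α be a linear functional whose SMOP is the co-recursive sequence S_n(x) = P_n(x) + (v_0/v̂_0)·P^{(1)}_{n−1}(x). Then the sequence (P̂^{(1)}_n)_{n≥0} is orthogonal with respect to the Christoffel transformation (x−c)v^α: ⟨(x−c)v^α, P̂^{(1)}_n·P̂^{(1)}_m⟩ = 0 for n ≠ m and ⟨(x−c)v^α, (P̂^{(1)}_n)²⟩ ≠ 0 for all n. In other words, v̂^{(1)} = (x−c)v^α up to normalization. -/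
open Polynomial

noncomputable section

/-- `P^{(1)}_{n-1}`, with the convention `P^{(1)}_{-1} = 0`. -/
def P1prev (P1 : ℕ → Polynomial ℂ) (n : ℕ) : Polynomial ℂ :=
  if n = 0 then 0 else P1 (n - 1)

def flin (u : ℕ → ℂ) : Polynomial ℂ →ₗ[ℂ] ℂ :=
  Polynomial.lsum fun k => (LinearMap.mulRight ℂ (u k))

theorem fapply_flin (u : ℕ → ℂ) (p : Polynomial ℂ) : fapply u p = flin u p := by
  simp [fapply, flin, Polynomial.lsum_apply]

theorem flin_C_mul (u : ℕ → ℂ) (x : ℂ) (p : Polynomial ℂ) : flin u (C x * p) = x * flin u p := by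
  rw [← smul_eq_C_mul, map_smul, smul_eq_mul]

theorem flin_monomial (u : ℕ → ℂ) (k : ℕ) (x : ℂ) : flin u (monomial k x) = x * u k := by
  simp [flin, Polynomial.lsum_apply, Polynomial.sum_monomial_index]

theorem flin_shift (u : ℕ → ℂ) (c : ℂ) (p : Polynomial ℂ) :
    flin (fun k => u (k + 1) - c * u k) p = flin u ((X - C c) * p) := by
  induction p using Polynomial.induction_on' with
  | add p q hp hq => rw [mul_add, map_add, map_add, hp, hq]
  | monomial n x =>
    rw [sub_mul, map_sub, flin_C_mul, X_mul_monomial, flin_monomial, flin_monomial, flin_monomial]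
    ring

theorem deg_red {P : Polynomial ℂ} {d : ℕ} (hm : P.Monic) (hd : P.natDegree = d)
    {q : Polynomial ℂ} (hq : q.degree < ((d + 1 : ℕ) : WithBot ℕ)) :
    (q - C (q.coeff d) * P).degree < (d : WithBot ℕ) := by
  rw [degree_lt_iff_coeff_zero] at *
  intro m hm'
  rcases hm'.eq_or_lt with h | h
  · subst h
    have : P.coeff d = 1 := by rw [← hd]; exact hm
    simp [this]
  · have : P.coeff m = 0 := coeff_eq_zero_of_natDegree_lt (by omega)
    simp [this, hq m h]

theorem orth_low {u : ℕ → ℂ} {P : ℕ → Polynomial ℂ} (h : IsSMOP u P) (n : ℕ) :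
    ∀ d, d ≤ n → ∀ q : Polynomial ℂ, q.degree < (d : WithBot ℕ) → flin u (P n * q) = 0 := by
  intro d
  induction d with
  | zero =>
    intro _ q hq
    have : q = 0 := by
      rw [← degree_eq_bot]; simpa using hq
    simp [this]
  | succ d ih =>
    intro hd q hq
    have h1 := ih (by omega) _ (deg_red (h.1 d) (h.2.1 d) hq)
    have h2 := h.2.2.1 n d (by omega)
    rw [fapply_flin] at h2
    have : P n * q = P n * (q - C (q.coeff d) * P d) + C (q.coeff d) * (P n * P d) := by ring
    rw [this, map_add, flin_C_mul, h1, h2]; ring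

theorem nondeg {u : ℕ → ℂ} {P : ℕ → Polynomial ℂ} (h : IsSMOP u P) :
    ∀ d : ℕ, ∀ q : Polynomial ℂ, q.degree < (d : WithBot ℕ) →
      (∀ k, k < d → flin u (P k * q) = 0) → q = 0 := by
  intro d
  induction d with
  | zero =>
    intro q hq _
    rw [← degree_eq_bot]; simpa using hq
  | succ d ih =>
    intro q hq hk
    have hr := deg_red (h.1 d) (h.2.1 d) hq
    have h1 := orth_low h d d le_rfl _ hr
    have h2 := h.2.2.2 d
    rw [fapply_flin] at h2
    have e : P d * q = P d * (q - C (q.coeff d) * P d) + C (q.coeff d) * (P d * P d) := by ring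
    have h3 := hk d (by omega)
    rw [e, map_add, flin_C_mul, h1, zero_add] at h3
    have h4 : q.coeff d = 0 := (mul_eq_zero.mp h3).resolve_right h2
    rw [h4] at hr
    exact ih q (by simpa using hr) (fun k hk' => hk k (by omega))

theorem smop_deg {u : ℕ → ℂ} {P : ℕ → Polynomial ℂ} (h : IsSMOP u P) (n : ℕ) :
    (P n).degree = (n : WithBot ℕ) := by
  rw [degree_eq_natDegree (h.1 n).ne_zero, h.2.1]

theorem indep {u : ℕ → ℂ} {P : ℕ → Polynomial ℂ} (h : IsSMOP u P) (n : ℕ) (x y z : ℂ)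
    (e : C x * P (n + 2) + C y * P (n + 1) + C z * P n = 0) : x = 0 ∧ y = 0 ∧ z = 0 := by
  have key : ∀ k, x * flin u (P (n + 2) * P k) + y * flin u (P (n + 1) * P k)
      + z * flin u (P n * P k) = 0 := by
    intro k
    have := congrArg (fun p => flin u (p * P k)) e
    simpa only [add_mul, mul_assoc, map_add, flin_C_mul, zero_mul, map_zero] using this
  have o : ∀ i j, i ≠ j → flin u (P i * P j) = 0 := fun i j hij => by
    rw [← fapply_flin]; exact h.2.2.1 i j hij
  have ne : ∀ i, flin u (P i * P i) ≠ 0 := fun i => by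
    rw [← fapply_flin]; exact h.2.2.2 i
  have k2 := key (n + 2)
  have k1 := key (n + 1)
  have k0 := key n
  rw [o (n + 1) (n + 2) (by omega), o n (n + 2) (by omega)] at k2
  rw [o (n + 2) (n + 1) (by omega), o n (n + 1) (by omega)] at k1
  rw [o (n + 2) n (by omega), o (n + 1) n (by omega)] at k0
  simp [ne] at k2 k1 k0
  exact ⟨k2, k1, k0⟩

theorem ger_conn {v vh : ℕ → ℂ} {c : ℂ} {P Ph : ℕ → Polynomial ℂ} (hP : IsSMOP v P)
    (hPh : IsSMOP vh Ph) (hger : ∀ n, vh (n + 1) - c * vh n = v n) (n : ℕ) :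
    ∃ l : ℂ, Ph (n + 1) = P (n + 1) + C l * P n ∧
      l * flin v (P n * P n) = flin vh (Ph (n + 1) * Ph (n + 1)) := by
  have hv : v = fun k => vh (k + 1) - c * vh k := by funext k; rw [hger]
  have ne : flin v (P n * P n) ≠ 0 := by rw [← fapply_flin]; exact hP.2.2.2 n
  have o : ∀ i j, i ≠ j → flin v (P i * P j) = 0 := fun i j hij => by
    rw [← fapply_flin]; exact hP.2.2.1 i j hij
  have sh : ∀ p, flin v p = flin vh ((X - C c) * p) := by
    intro p; rw [hv, flin_shift]
  have low : ∀ k, k < n → flin v (P k * Ph (n + 1)) = 0 := by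
    intro k hk
    rw [sh, show (X - C c) * (P k * Ph (n + 1)) = Ph (n + 1) * ((X - C c) * P k) by ring]
    apply orth_low hPh (n + 1) (n + 1) le_rfl
    rw [degree_mul, degree_X_sub_C, smop_deg hP]
    have : 1 + k < n + 1 := by omega
    exact_mod_cast this
  have top : flin v (P n * Ph (n + 1)) = flin vh (Ph (n + 1) * Ph (n + 1)) := by
    have hd : ((X - C c) * P n - Ph (n + 1)).degree < ((n + 1 : ℕ) : WithBot ℕ) := by
      have d1 : ((X - C c) * P n).degree = ((n + 1 : ℕ) : WithBot ℕ) := by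
        rw [degree_mul, degree_X_sub_C, smop_deg hP, add_comm]; rfl
      rw [← d1]
      apply degree_sub_lt_left
      · rw [d1, smop_deg hPh]
      · exact mul_ne_zero (X_sub_C_ne_zero c) (hP.1 n).ne_zero
      · rw [((monic_X_sub_C c).mul (hP.1 n)).leadingCoeff, (hPh.1 (n+1)).leadingCoeff]
    have := orth_low hPh (n + 1) (n + 1) le_rfl _ hd
    rw [mul_sub, map_sub, sub_eq_zero] at this
    rw [sh, ← this]; congr 1; ring
  refine ⟨flin v (P n * Ph (n + 1)) / flin v (P n * P n), ?_, ?_⟩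
  · set l := flin v (P n * Ph (n + 1)) / flin v (P n * P n) with hl
    have hz : Ph (n + 1) - P (n + 1) - C l * P n = 0 := by
      apply nondeg hP (n + 1)
      · have d1 : (Ph (n + 1) - P (n + 1)).degree < ((n + 1 : ℕ) : WithBot ℕ) := by
          rw [← smop_deg hPh (n + 1)]
          apply degree_sub_lt_left
          · rw [smop_deg hPh, smop_deg hP]
          · exact (hPh.1 _).ne_zero
          · rw [(hP.1 _).leadingCoeff, (hPh.1 _).leadingCoeff]
        refine (degree_sub_le _ _).trans_lt (max_lt d1 ?_)
        rw [← smul_eq_C_mul]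
        refine (degree_smul_le l (P n)).trans_lt ?_
        rw [smop_deg hP]
        exact_mod_cast Nat.lt_succ_self n
      · intro k hk
        rw [show P k * (Ph (n + 1) - P (n + 1) - C l * P n)
          = P k * Ph (n + 1) - P k * P (n + 1) - C l * (P k * P n) by ring, map_sub, map_sub,
          flin_C_mul, o k (n + 1) (by omega)]
        rcases (Nat.lt_succ_iff.mp hk).eq_or_lt with h | h
        · subst h
          rw [hl]; field_simp; ring
        · rw [low k h, o k n (by omega)]; ring
    linear_combination hz
  · rw [← top]; field_simp

/-- the first-kind associated polynomials `(P̂^{(1)}_n)` of the Geronimus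
transformation `v̂` are orthogonal with respect to the Christoffel transformation
`(x-c)v^α` of the functional `v^α` whose SMOP is the co-recursive sequence `(S_n)`. -/
theorem stmt_18 (v : ℕ → ℂ) (c : ℂ) (P : ℕ → Polynomial ℂ) (hP : IsSMOP v P)
    (a b : ℕ → ℂ) (hrec : HasTTRR P a b) (ha : ∀ n, 1 ≤ n → a n ≠ 0)
    (P1 : ℕ → Polynomial ℂ)
    (hP1 : HasTTRR P1 (fun n => a (n + 1)) (fun n => b (n + 1)))
    (vh : ℕ → ℂ) (hger : ∀ n, vh (n + 1) - c * vh n = v n) (hvh0 : vh 0 ≠ 0)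
    (Ph : ℕ → Polynomial ℂ) (hPh : IsSMOP vh Ph)
    (ah bh : ℕ → ℂ) (hrech : HasTTRR Ph ah bh)
    (Ph1 : ℕ → Polynomial ℂ)
    (hPh1 : HasTTRR Ph1 (fun n => ah (n + 1)) (fun n => bh (n + 1)))
    (S : ℕ → Polynomial ℂ)
    (hS : ∀ n, S n = P n + C (v 0 / vh 0) * P1prev P1 n)
    (vα : ℕ → ℂ) (hvα : IsSMOP vα S) :
    (∀ n m, n ≠ m → fapply (fun k => vα (k + 1) - c * vα k) (Ph1 n * Ph1 m) = 0)
    ∧ (∀ n, fapply (fun k => vα (k + 1) - c * vα k) (Ph1 n * Ph1 n) ≠ 0) := by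
  have hconn := fun n => ger_conn hP hPh hger n
  choose l hl hl2 using hconn
  have neP : ∀ n, flin v (P n * P n) ≠ 0 := fun n => by
    rw [← fapply_flin]; exact hP.2.2.2 n
  have nePh : ∀ n, flin vh (Ph n * Ph n) ≠ 0 := fun n => by
    rw [← fapply_flin]; exact hPh.2.2.2 n
  have hl0 : ∀ n, l n ≠ 0 := by
    intro n h
    have := hl2 n
    rw [h, zero_mul] at this
    exact nePh _ this.symm
  obtain ⟨r0, r1, r2⟩ := hrec
  obtain ⟨s0, s1, s2⟩ := hrech
  obtain ⟨p0, p1, p2⟩ := hP1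
  obtain ⟨q0, q1, q2⟩ := hPh1
  have r2' : ∀ n, X * P (n + 1) = P (n + 2) + C (b (n + 1)) * P (n + 1) + C (a (n + 1)) * P n :=
    fun n => r2 (n + 1) (by omega)
  have s2' : ∀ n, X * Ph (n + 1) = Ph (n + 2) + C (bh (n + 1)) * Ph (n + 1)
      + C (ah (n + 1)) * Ph n := fun n => s2 (n + 1) (by omega)
  have p2' : ∀ n, X * P1 (n + 1) = P1 (n + 2) + C (b (n + 2)) * P1 (n + 1)
      + C (a (n + 2)) * P1 n := fun n => p2 (n + 1) (by omega)
  have q2' : ∀ n, X * Ph1 (n + 1) = Ph1 (n + 2) + C (bh (n + 2)) * Ph1 (n + 1)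
      + C (ah (n + 2)) * Ph1 n := fun n => q2 (n + 1) (by omega)
  simp only [zero_add] at p1 q1
  -- recurrence for S
  set α := v 0 / vh 0 with hα
  have S0 : S 0 = 1 := by rw [hS]; simp [P1prev, r0]
  have S1 : ∀ n, S (n + 1) = P (n + 1) + C α * P1 n := by intro n; rw [hS]; simp [P1prev]
  have S1x : S 1 = X - C (b 0) + C α := by
    rw [S1 0, p0]; rw [r0] at r1; linear_combination -r1
  have Srec : ∀ n, X * S (n + 1) = S (n + 2) + C (b (n + 1)) * S (n + 1)
      + C (a (n + 1)) * S n := by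
    intro n
    rcases n with _ | n
    · rw [S1 0, S1 1, S0, p0]
      rw [p0] at p1
      have := r2' 0
      rw [r0] at this
      linear_combination this + C α * p1
    · rw [S1 (n + 1), S1 (n + 2), S1 n]
      linear_combination r2' (n + 1) + C α * p2' n
  -- coefficient relations
  have F1 : flin vh 1 = vh 0 := by
    have := flin_monomial vh 0 1
    simpa using this
  have Fv1 : flin v 1 = v 0 := by
    have := flin_monomial v 0 1
    simpa using this
  have FX : flin vh X = vh 1 := by
    have := flin_monomial vh 1 1
    rw [monomial_one_one_eq_X] at this
    simpa using this
  have Ph1x : Ph 1 = X - C (b 0) + C (l 0) := by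
    have := hl 0
    rw [r0] at this r1
    simp only [zero_add] at this
    linear_combination this - r1
  have c1 : c = b 0 - α - l 0 := by
    have h := hPh.2.2.1 1 0 (by omega)
    rw [fapply_flin, s0, mul_one, Ph1x, map_add, map_sub, FX,
      show C (b 0) = C (b 0) * (1 : ℂ[X]) by ring, show C (l 0) = C (l 0) * (1 : ℂ[X]) by ring,
      flin_C_mul, flin_C_mul, F1] at h
    have g := hger 0
    simp only [zero_add] at g
    rw [hα]
    field_simp
    linear_combination h - g
  have c2 : ah 1 = l 0 * α := by
    have h := hl2 0
    rw [r0, mul_one, Fv1] at h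
    simp only [zero_add] at h
    have h2 := s2' 0
    rw [s0] at h2
    simp only [zero_add, mul_one] at h2
    have h3 : flin vh (Ph 1 * Ph 1) = ah 1 * vh 0 := by
      have e : Ph 1 * Ph 1 = Ph 2 * Ph 0 + C (bh 1 - b 0 + l 0) * (Ph 1 * Ph 0)
          + C (ah 1) * 1 := by
        rw [s0]
        simp only [C_add, C_sub]
        linear_combination h2 + Ph 1 * Ph1x
      have o2 := hPh.2.2.1 2 0 (by omega)
      have o1 := hPh.2.2.1 1 0 (by omega)
      rw [fapply_flin] at o1 o2
      rw [e, map_add, map_add, flin_C_mul, flin_C_mul, o1, o2, F1]; ring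
    rw [h3] at h
    rw [hα]; field_simp; linear_combination -h
  have Prec0 : X * P 0 = P 1 + C (b 0) * P 0 := r1
  have k0 : b 1 + l 0 = l 1 + bh 1 ∧ a 1 + l 0 * b 0 = bh 1 * l 0 + ah 1 := by
    have e := s2' 0
    have hl0' := hl 0
    have hl1' := hl 1
    have t := r2' 0
    simp only [zero_add] at e hl0' hl1' t
    rw [hl0', hl1', s0, ← r0] at e
    have := indep hP 0 0 (b 1 + l 0 - l 1 - bh 1) (a 1 + l 0 * b 0 - bh 1 * l 0 - ah 1) (by
      simp only [C_add, C_sub, C_mul, zero_add, C_0]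
      simp only [zero_add, Nat.reduceAdd] at *
      linear_combination e - t - C (l 0) * Prec0)
    constructor
    · linear_combination this.2.1
    · linear_combination this.2.2
  have kn : ∀ n, b (n + 2) + l (n + 1) = l (n + 2) + bh (n + 2) ∧
      a (n + 2) + l (n + 1) * b (n + 1) = bh (n + 2) * l (n + 1) + ah (n + 2) ∧
      l (n + 1) * a (n + 1) = ah (n + 2) * l n := by
    intro n
    have e := s2' (n + 1)
    rw [hl (n + 1 + 1), hl (n + 1), hl n] at e
    have := indep hP n (b (n + 2) + l (n + 1) - l (n + 2) - bh (n + 2))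
      (a (n + 2) + l (n + 1) * b (n + 1) - bh (n + 2) * l (n + 1) - ah (n + 2))
      (l (n + 1) * a (n + 1) - ah (n + 2) * l n) (by
      simp only [C_add, C_sub, C_mul]
      linear_combination e - r2' (n + 1) - C (l (n + 1)) * r2' n)
    refine ⟨?_, ?_, ?_⟩
    · linear_combination this.1
    · linear_combination this.2.1
    · linear_combination this.2.2
  have main : ∀ n, (X - C c) * Ph1 n = S (n + 1) + C (l n) * S n ∧
      (X - C c) * Ph1 (n + 1) = S (n + 2) + C (l (n + 1)) * S (n + 1) := by
    intro n
    induction n with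
    | zero =>
      have A : (X - C c) * Ph1 0 = S 1 + C (l 0) * S 0 := by
        rw [q0, S1x, S0, c1]; simp only [C_sub]; ring
      refine ⟨A, ?_⟩
      have t := Srec 0
      have k1 := congrArg C k0.1
      have k2 := congrArg C k0.2
      have k3 := congrArg C c2
      simp only [C_add, C_mul] at k1 k2 k3
      simp only [zero_add] at t ⊢
      rw [q0] at q1 A
      rw [S0] at *
      linear_combination (-(X - C c)) * q1 + (X - C (bh 1)) * A + t + S 1 * k1 + k2
        - C (l 0) * S1x + k3
    | succ n ih =>
      refine ⟨ih.2, ?_⟩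
      obtain ⟨k1, k2, k3⟩ := kn n
      have k1 := congrArg C k1
      have k2 := congrArg C k2
      have k3 := congrArg C k3
      simp only [C_add, C_mul] at k1 k2 k3
      linear_combination (-(X - C c)) * q2' n + (X - C (bh (n + 2))) * ih.2
        - C (ah (n + 2)) * ih.1 + Srec (n + 1) + C (l (n + 1)) * Srec n
        + S (n + 2) * k1 + S (n + 1) * k2 + S n * k3
  have neS : ∀ n, flin vα (S n * S n) ≠ 0 := fun n => by
    rw [← fapply_flin]; exact hvα.2.2.2 n
  -- degrees of Ph1
  have mon : ∀ n, (Ph1 n).Monic ∧ (Ph1 n).degree = (n : WithBot ℕ) := by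
    intro n
    have hlt : (C (l n) * S n).degree < (S (n + 1)).degree := by
      rw [← smul_eq_C_mul]
      refine (degree_smul_le _ _).trans_lt ?_
      rw [smop_deg hvα, smop_deg hvα]
      exact_mod_cast Nat.lt_succ_self n
    have m : ((X - C c) * Ph1 n).Monic := by
      rw [(main n).1]; exact (hvα.1 (n + 1)).add_of_left hlt
    have m' := (monic_X_sub_C c).of_mul_monic_left m
    refine ⟨m', ?_⟩
    have d : ((X - C c) * Ph1 n).natDegree = n + 1 := by
      rw [(main n).1, natDegree_add_eq_left_of_degree_lt hlt, hvα.2.1]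
    rw [(monic_X_sub_C c).natDegree_mul m', natDegree_X_sub_C] at d
    rw [degree_eq_natDegree m'.ne_zero]
    congr 1; omega
  have expand : ∀ n q, flin vα ((X - C c) * (Ph1 n * q)) =
      flin vα (S (n + 1) * q) + l n * flin vα (S n * q) := by
    intro n q
    rw [← mul_assoc, (main n).1, add_mul, mul_assoc, map_add, flin_C_mul]
  have orth : ∀ n m, m < n → flin vα ((X - C c) * (Ph1 n * Ph1 m)) = 0 := by
    intro n m h
    have h' : (Ph1 m).degree < (n : WithBot ℕ) := by rw [(mon m).2]; exact_mod_cast h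
    rw [expand, orth_low hvα n n le_rfl _ h', orth_low hvα (n + 1) n (by omega) _ h']; ring
  refine ⟨?_, ?_⟩
  · intro n m hnm
    rw [fapply_flin, flin_shift]
    rcases lt_or_gt_of_ne hnm with h | h
    · rw [mul_comm (Ph1 n)]; exact orth m n h
    · exact orth n m h
  · intro n
    rw [fapply_flin, flin_shift, expand]
    have h1 : (Ph1 n).degree < ((n + 1 : ℕ) : WithBot ℕ) := by
      rw [(mon n).2]; exact_mod_cast Nat.lt_succ_self n
    have h2 : (Ph1 n - S n).degree < (n : WithBot ℕ) := by
      rw [← (mon n).2]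
      apply degree_sub_lt_left
      · rw [(mon n).2, smop_deg hvα]
      · exact (mon n).1.ne_zero
      · rw [(mon n).1.leadingCoeff, (hvα.1 n).leadingCoeff]
    have h3 := orth_low hvα n n le_rfl _ h2
    rw [mul_sub, map_sub, sub_eq_zero] at h3
    rw [orth_low hvα (n + 1) (n + 1) le_rfl _ h1, zero_add, h3]
    exact mul_ne_zero (hl0 n) (neS n)
end
end
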